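/- Let γ > 1, A0 > 0 and 0 < r0 < r1. Suppose ρ, U1, U2 : [r0, r1] → ℝ are differentiable with ρ(r) > 0, U1(r) ≠ 0 and M1(r)² < 1 for all r ∈ [r0, r1], and that (ρ, U1, U2) satisfies the radially symmetric steady Euler system on [r0, r1]. Then the total Mach number squared r ↦ M1(r)² + M2(r)² is strictly decreasing on [r0, r1] (i.e., the total Mach number monotonically increases as r decreases from r1 to r0). -/

import Mathlib

open Real Set

/-!
Write `a = c²` and `q = ρ' / ρ`. Conservation of mass and of radial momentum combine to
`(a - U1²) q = (U1² + U2²) / r`, so the density increases with `r` in a radially subsonic flow.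
Conservation of radial and of angular momentum combine to Bernoulli's law
`U1 U1' + U2 U2' = -a q`. Since `c' = (γ - 1) / 2 * q c`, the total Mach number `M² = M1² + M2²`
satisfies `(M²)' = -q (2 + (γ - 1) M²) < 0`.
-/

/-- The steady, radially symmetric Euler equations at a single radius `r`: conservation of mass,
radial momentum and angular momentum for a flow with density `ρ`, radial velocity `u`, angular
velocity component `v` and their derivatives `ρ'`, `u'`, `v'`. The pressure law enters only through
`a = dp/dρ`, the squared sound speed, so that the pressure gradient is `a * ρ'`. -/
structure RadialEulerAt (a r ρ u v ρ' u' v' : ℝ) : Prop where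
  mass : ρ' * u + ρ * u' + ρ * u / r = 0
  radial_momentum : u * u' + (1 / ρ) * (a * ρ') - v ^ 2 / r = 0
  angular_momentum : u * v' + u * v / r = 0

namespace RadialEulerAt

variable {a r ρ u v ρ' u' v' : ℝ}

theorem bernoulli (h : RadialEulerAt a r ρ u v ρ' u' v') (hu : u ≠ 0) :
    u * u' + v * v' = -(a * (ρ' / ρ)) := by
  have angular_deriv : v' = -(v / r) :=
    mul_left_cancel₀ hu (by linear_combination h.angular_momentum)
  rw [angular_deriv]
  linear_combination h.radial_momentum

theorem sub_sq_mul_density_logDeriv (h : RadialEulerAt a r ρ u v ρ' u' v') (hρ : ρ ≠ 0) :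
    (a - u ^ 2) * (ρ' / ρ) = (u ^ 2 + v ^ 2) / r := by
  have radial_deriv : u' = -(u * (ρ' / ρ + 1 / r)) := by
    refine mul_left_cancel₀ hρ ?_
    linear_combination h.mass + u * mul_div_cancel₀ ρ' hρ
  have radial_momentum := h.radial_momentum
  rw [radial_deriv] at radial_momentum
  linear_combination radial_momentum

theorem density_logDeriv_pos (h : RadialEulerAt a r ρ u v ρ' u' v') (hr : 0 < r) (hρ : ρ ≠ 0)
    (hu : u ≠ 0) (hsub : u ^ 2 < a) : 0 < ρ' / ρ := by
  refine pos_of_mul_pos_right ?_ (sub_pos.2 hsub).le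
  rw [h.sub_sq_mul_density_logDeriv hρ]
  positivity

theorem hasDerivWithinAt_total_mach_sq {γ : ℝ} {s : Set ℝ} {U1 U2 c : ℝ → ℝ}
    (h : RadialEulerAt (c r ^ 2) r ρ (U1 r) (U2 r) ρ' u' v') (hu : U1 r ≠ 0) (hc : c r ≠ 0)
    (hU1 : HasDerivWithinAt U1 u' s r) (hU2 : HasDerivWithinAt U2 v' s r)
    (hc' : HasDerivWithinAt c ((γ - 1) / 2 * (ρ' / ρ) * c r) s r) :
    HasDerivWithinAt (fun x => (U1 x / c x) ^ 2 + (U2 x / c x) ^ 2)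
      (-(ρ' / ρ * (2 + (γ - 1) * ((U1 r / c r) ^ 2 + (U2 r / c r) ^ 2)))) s r := by
  refine (((hU1.fun_div hc' hc).fun_pow 2).fun_add
    ((hU2.fun_div hc' hc).fun_pow 2)).congr_deriv ?_
  have bernoulli := h.bernoulli hu
  generalize ρ' / ρ = q at bernoulli ⊢
  simp only [Nat.cast_ofNat, Nat.add_one_sub_one, pow_one]
  field_simp
  linear_combination 2 * bernoulli

end RadialEulerAt

/-- The sound speed `√(dp/dρ)` at density `ρ > 0` of a gas with pressure law `p = A * ρ ^ γ`, by
which velocities are divided to obtain Mach numbers. It is written as a multiple of a power of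
`ρ`. -/
noncomputable def soundSpeed (A γ ρ : ℝ) : ℝ :=
  √(A * γ) * ρ ^ ((γ - 1) / 2)

section SoundSpeed

variable {A γ : ℝ}

theorem soundSpeed_pos {ρ : ℝ} (hAγ : 0 < A * γ) (hρ : 0 < ρ) : 0 < soundSpeed A γ ρ :=
  mul_pos (sqrt_pos.2 hAγ) (rpow_pos_of_pos hρ _)

theorem soundSpeed_sq {ρ : ℝ} (hAγ : 0 ≤ A * γ) (hρ : 0 ≤ ρ) :
    soundSpeed A γ ρ ^ 2 = A * γ * ρ ^ (γ - 1) := by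
  rw [soundSpeed, mul_pow, sq_sqrt hAγ, ← rpow_mul_natCast hρ, Nat.cast_ofNat,
    div_mul_cancel₀ _ two_ne_zero]

theorem hasDerivWithinAt_soundSpeed {ρ : ℝ → ℝ} {ρ' r : ℝ} {s : Set ℝ}
    (hρ : HasDerivWithinAt ρ ρ' s r) (hne : ρ r ≠ 0) :
    HasDerivWithinAt (fun x => soundSpeed A γ (ρ x))
      ((γ - 1) / 2 * (ρ' / ρ r) * soundSpeed A γ (ρ r)) s r := by
  refine ((hρ.rpow_const (Or.inl hne)).const_mul √(A * γ)).congr_deriv ?_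
  rw [soundSpeed, rpow_sub_one hne]
  ring

end SoundSpeed

theorem total_mach_strictAnti_general {γ A0 : ℝ} (hγ : 1 ≤ γ) (hA0 : 0 < A0)
    {s : Set ℝ} (hs : Convex ℝ s) (hs_pos : ∀ r ∈ s, 0 < r)
    {ρ U1 U2 ρ' U1' U2' : ℝ → ℝ}
    (hρ : ∀ r ∈ s, HasDerivWithinAt ρ (ρ' r) s r)
    (hU1 : ∀ r ∈ s, HasDerivWithinAt U1 (U1' r) s r)
    (hU2 : ∀ r ∈ s, HasDerivWithinAt U2 (U2' r) s r)
    (hρpos : ∀ r ∈ s, 0 < ρ r) (hU1ne : ∀ r ∈ s, U1 r ≠ 0)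
    {c M1 M2 : ℝ → ℝ} (hc : ∀ r, c r = soundSpeed A0 γ (ρ r))
    (hM1 : ∀ r, M1 r = U1 r / c r) (hM2 : ∀ r, M2 r = U2 r / c r)
    (hsub : ∀ r ∈ s, M1 r ^ 2 < 1)
    (heuler : ∀ r ∈ s, RadialEulerAt (A0 * γ * ρ r ^ (γ - 1)) r (ρ r) (U1 r) (U2 r)
      (ρ' r) (U1' r) (U2' r)) :
    StrictAntiOn (fun r => M1 r ^ 2 + M2 r ^ 2) s := by
  obtain rfl : c = fun r => soundSpeed A0 γ (ρ r) := funext hc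
  obtain rfl : M1 = fun r => U1 r / soundSpeed A0 γ (ρ r) := funext hM1
  obtain rfl : M2 = fun r => U2 r / soundSpeed A0 γ (ρ r) := funext hM2
  have hAγ : 0 < A0 * γ := by positivity
  have c_pos (r) (hr : r ∈ s) : 0 < soundSpeed A0 γ (ρ r) := soundSpeed_pos hAγ (hρpos r hr)
  have euler (r) (hr : r ∈ s) : RadialEulerAt (soundSpeed A0 γ (ρ r) ^ 2) r (ρ r) (U1 r) (U2 r)
      (ρ' r) (U1' r) (U2' r) := by
    rw [soundSpeed_sq hAγ.le (hρpos r hr).le]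
    exact heuler r hr
  have mach_deriv (r) (hr : r ∈ s) :=
    (euler r hr).hasDerivWithinAt_total_mach_sq (hU1ne r hr) (c_pos r hr).ne' (hU1 r hr)
      (hU2 r hr) (hasDerivWithinAt_soundSpeed (hρ r hr) (hρpos r hr).ne')
  refine strictAntiOn_of_hasDerivWithinAt_neg hs
    (fun r hr => (mach_deriv r hr).continuousWithinAt)
    (fun r hr => (mach_deriv r (interior_subset hr)).mono interior_subset) fun r hr => ?_
  have hr := interior_subset hr
  have subsonic : U1 r ^ 2 < soundSpeed A0 γ (ρ r) ^ 2 := by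
    simpa only [div_pow, div_lt_one (pow_pos (c_pos r hr) 2)] using hsub r hr
  have density_increasing : 0 < ρ' r / ρ r :=
    (euler r hr).density_logDeriv_pos (hs_pos r hr) (hρpos r hr).ne' (hU1ne r hr) subsonic
  exact neg_neg_of_pos (mul_pos density_increasing
    (add_pos_of_pos_of_nonneg two_pos (mul_nonneg (sub_nonneg.2 hγ) (by positivity))))

/-- For a radially symmetric steady Euler flow on `[r0, r1]` with positive
density, nonvanishing radial velocity and subsonic radial Mach number, the squared total
Mach number `M1² + M2²` is strictly decreasing on `[r0, r1]`. -/
theorem total_mach_strictAnti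
    (γ A0 r0 r1 : ℝ) (hγ : 1 < γ) (hA0 : 0 < A0) (hr0 : 0 < r0) (hr01 : r0 < r1)
    (ρ U1 U2 ρ' U1' U2' : ℝ → ℝ)
    (hρ : ∀ r ∈ Icc r0 r1, HasDerivWithinAt ρ (ρ' r) (Icc r0 r1) r)
    (hU1 : ∀ r ∈ Icc r0 r1, HasDerivWithinAt U1 (U1' r) (Icc r0 r1) r)
    (hU2 : ∀ r ∈ Icc r0 r1, HasDerivWithinAt U2 (U2' r) (Icc r0 r1) r)
    (hρpos : ∀ r ∈ Icc r0 r1, 0 < ρ r)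
    (hU1ne : ∀ r ∈ Icc r0 r1, U1 r ≠ 0)
    (c M1 M2 : ℝ → ℝ)
    (hc : ∀ r, c r = Real.sqrt (A0 * γ) * ρ r ^ ((γ - 1) / 2))
    (hM1 : ∀ r, M1 r = U1 r / c r) (hM2 : ∀ r, M2 r = U2 r / c r)
    (hsub : ∀ r ∈ Icc r0 r1, (M1 r) ^ 2 < 1)
    (heq1 : ∀ r ∈ Icc r0 r1, ρ' r * U1 r + ρ r * U1' r + ρ r * U1 r / r = 0)
    (heq2 : ∀ r ∈ Icc r0 r1,
      U1 r * U1' r + (1 / ρ r) * (A0 * γ * ρ r ^ (γ - 1) * ρ' r) - (U2 r) ^ 2 / r = 0)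
    (heq3 : ∀ r ∈ Icc r0 r1, U1 r * U2' r + U1 r * U2 r / r = 0) :
    StrictAntiOn (fun r => (M1 r) ^ 2 + (M2 r) ^ 2) (Icc r0 r1) :=
  total_mach_strictAnti_general hγ.le hA0 (convex_Icc r0 r1) (fun _ hr => hr0.trans_le hr.1)
    hρ hU1 hU2 hρpos hU1ne hc hM1 hM2 hsub fun r hr => ⟨heq1 r hr, heq2 r hr, heq3 r hr⟩
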